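/- Let Q be a ground program containing the fact d← (rule with head {d} and empty body), and let H, B⁺, B⁻ be finite sets of atoms. Then the program Q ∪ {H ← B⁺ ∪ {d}, B⁻} (the rule with head H, positive body B⁺ ∪ {d}, and negative body B⁻) has exactly the same answer sets as the program Q ∪ {H ← B⁺, B⁻}. That is, adding a positive body atom d to a rule, where d is a fact of the program, does not change the answer sets. -/

import Mathlib

/-- A ground disjunctive ASP rule: head atoms, positive body atoms, negative body atoms. -/
structure Rule (α : Type*) where
  head : Finset α
  pos : Finset α
  neg : Finset α

/-- An interpretation `I` satisfies a rule `r`. -/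
def satRule {α : Type*} (I : Set α) (r : Rule α) : Prop :=
  ((∀ b ∈ r.pos, b ∈ I) ∧ (∀ b ∈ r.neg, b ∉ I)) → ∃ a ∈ r.head, a ∈ I

/-- An interpretation `I` satisfies a program. -/
def satProg {α : Type*} (I : Set α) (Prg : Set (Rule α)) : Prop :=
  ∀ r ∈ Prg, satRule I r

/-- The reduct of a program with respect to an interpretation `I`. -/
def reduct {α : Type*} (Prg : Set (Rule α)) (I : Set α) : Set (Rule α) :=
  {r' | ∃ r ∈ Prg, (∀ b ∈ r.neg, b ∉ I) ∧ r' = ⟨r.head, r.pos, ∅⟩}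

/-- `I` is an answer set of `Prg`. -/
def isAnswerSet {α : Type*} (Prg : Set (Rule α)) (I : Set α) : Prop :=
  satProg I Prg ∧ ∀ J ⊂ I, ¬ satProg J (reduct Prg I)

/-- The set of answer sets of a program. -/
def AS {α : Type*} (Prg : Set (Rule α)) : Set (Set α) := {I | isAnswerSet Prg I}

/-- A program is coherent if it has at least one answer set. -/
def coherent {α : Type*} (Prg : Set (Rule α)) : Prop := (AS Prg).Nonempty

/-- The fact `a ←`. -/
def fact {α : Type*} (a : α) : Rule α := ⟨{a}, ∅, ∅⟩

/-- Atom `a` occurs in rule `r`. -/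
def occursIn {α : Type*} (a : α) (r : Rule α) : Prop :=
  a ∈ r.head ∨ a ∈ r.pos ∨ a ∈ r.neg

/-- The atoms occurring in a program. -/
def progAtoms {α : Type*} (Prg : Set (Rule α)) : Set α := {a | ∃ r ∈ Prg, occursIn a r}

/-- The constraint `← not a`. -/
def constraintNot {α : Type*} (a : α) : Rule α := ⟨∅, ∅, {a}⟩

/-- `P_T`: the constraints `← not a` for `a ∈ T`. -/
def PT {α : Type*} (T : Set α) : Set (Rule α) := constraintNot '' T

/-- `P_A`: the facts `a ←` for `a ∈ A`. -/
def PA {α : Type*} (A : Set α) : Set (Rule α) := fact '' A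

/-!
An answer set of `P` is a set `I` that models its own reduct `P^I` while no proper subset does, so
`AS P` depends only on the pairs `J ⊆ I` with `J ⊨ P^I`. If `d` belongs to every such `J` for the
program `Q`, then on the pairs relevant to an extension of `Q` the body atom `d` is always true.
-/

section

variable {α : Type*} {P Q R : Set (Rule α)} {I J : Set α} {d : α}

theorem satRule_fact : satRule I (fact d) ↔ d ∈ I := by
  simp [satRule, fact]

theorem satRule_insert_pos [DecidableEq α] (hd : d ∈ I) (H Bp Bn : Finset α) :
    satRule I ⟨H, insert d Bp, Bn⟩ ↔ satRule I ⟨H, Bp, Bn⟩ := by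
  simp [satRule, hd]

theorem satProg_reduct_iff :
    satProg J (reduct P I) ↔
      ∀ r ∈ P, (∀ b ∈ r.neg, b ∉ I) → satRule J ⟨r.head, r.pos, ∅⟩ := by
  constructor
  · exact fun h r hr hneg => h _ ⟨r, hr, hneg, rfl⟩
  · rintro h _ ⟨r, hr, hneg, rfl⟩
    exact h r hr hneg

theorem satProg_reduct_self : satProg I (reduct P I) ↔ satProg I P := by
  rw [satProg_reduct_iff]
  refine forall₂_congr fun r _ => ?_
  simp only [satRule, Finset.notMem_empty, false_imp_iff, implies_true, and_true]
  tauto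

theorem satProg_reduct_union :
    satProg J (reduct (P ∪ Q) I) ↔ satProg J (reduct P I) ∧ satProg J (reduct Q I) := by
  simp only [satProg_reduct_iff, Set.mem_union, or_imp, forall_and]

theorem mem_of_satProg_reduct_of_fact_mem (hd : fact d ∈ P) (hJ : satProg J (reduct P I)) :
    d ∈ J :=
  satRule_fact.1 (satProg_reduct_iff.1 hJ (fact d) hd (by simp [fact]))

theorem satProg_reduct_insert_pos [DecidableEq α] (hd : d ∈ J) (H Bp Bn : Finset α) :
    satProg J (reduct {⟨H, insert d Bp, Bn⟩} I) ↔ satProg J (reduct {⟨H, Bp, Bn⟩} I) := by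
  simp only [satProg_reduct_iff, Set.mem_singleton_iff, forall_eq, satRule_insert_pos hd]

theorem AS_congr
    (h : ∀ I J, J ⊆ I → (satProg J (reduct P I) ↔ satProg J (reduct Q I))) :
    AS P = AS Q := by
  ext I
  have models_iff : satProg I P ↔ satProg I Q := by
    simpa only [satProg_reduct_self] using h I I subset_rfl
  exact and_congr models_iff (forall₂_congr fun J hJ => not_congr (h I J hJ.subset))

theorem AS_union_congr
    (h : ∀ I J, J ⊆ I → satProg J (reduct Q I) →
      (satProg J (reduct P I) ↔ satProg J (reduct R I))) :
    AS (Q ∪ P) = AS (Q ∪ R) :=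
  AS_congr fun I J hJI => by
    simpa only [satProg_reduct_union] using and_congr_right (h I J hJI)

end

theorem stmt_10_general {α : Type*} [DecidableEq α] (Q : Set (Rule α)) (d : α)
    (hd : ∀ I J, J ⊆ I → satProg J (reduct Q I) → d ∈ J) (H Bp Bn : Finset α) :
    AS (Q ∪ {(⟨H, insert d Bp, Bn⟩ : Rule α)}) = AS (Q ∪ {(⟨H, Bp, Bn⟩ : Rule α)}) :=
  AS_union_congr fun I J hJI hJ => satProg_reduct_insert_pos (hd I J hJI hJ) H Bp Bn

theorem stmt_10 {α : Type*} [DecidableEq α]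
    (Q : Set (Rule α)) (d : α) (hd : fact d ∈ Q)
    (H Bp Bn : Finset α) :
    AS (Q ∪ {(⟨H, insert d Bp, Bn⟩ : Rule α)}) = AS (Q ∪ {(⟨H, Bp, Bn⟩ : Rule α)}) :=
  stmt_10_general Q d (fun _ _ _ => mem_of_satProg_reduct_of_fact_mem hd) H Bp Bn
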